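/- (Theorem 1, convergence of over-the-air federated policy gradient.) In the over-the-air federated PG model, suppose σ_h² ≤ (N+1)·m_h² and 0 < α ≤ 1/(m_h·L), and set Λ = M·(N+1)·m_h² − (M−1)·σ_h² (so Λ ≥ (N+1)·m_h² > 0). Then for every integer K ≥ 1, (1/K)·Σ_{k=0}^{K−1} E[‖∇J(θ^k)‖²] ≤ 2·M·N·m_h·(J(θ^0) − J*)/(α·Λ·K) + M·σ̄²/(N·Λ) + σ_h²·V²/Λ. -/

import Mathlib

open MeasureTheory ProbabilityTheory Gradient

/-!
Given the past `𝓕 k`, an agent transmits its minibatch mean, whose conditional mean is `∇J(θ^k)` and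
whose conditional second moment is at most `V²/M + (M-1)/M * ‖∇J(θ^k)‖²`. The received signal is a
sum of conditionally independent contributions, so its variance is the sum of their variances: its
conditional mean is `N m_h ∇J(θ^k)` and its conditional second moment is affine in `‖∇J(θ^k)‖²`. The
descent lemma for `J`, used with smoothness constant `1/(α m_h) ≥ L` so that `L` drops out, bounds
`E J(θ^{k+1})` by `E J(θ^k) - c E‖∇J(θ^k)‖² + D` with `c = αΛ/(2 M N m_h) > 0`, and telescoping
gives the rate.

Conditioning is carried out with the regular conditional law `condExpKernel μ (𝓕 k)`. Conditional
independence is mutual independence under almost every conditional law: it has to be checked only on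
countable π-systems generating the σ-algebras, which leaves countably many null sets.
-/

/-- The family `{h_i}_i ∪ {X_{i,m}}_{i,m} ∪ {n}` combined into a single family of random
variables with common codomain `ℝ × ℝ^d`; each member generates exactly the σ-algebra of the
corresponding original random variable, so (conditional) mutual independence of this family is
equivalent to (conditional) mutual independence of the original family. -/
def otaFam {d N M : ℕ} {Ω : Type*}
    (h : Fin N → Ω → ℝ) (X : Fin N → Fin M → Ω → EuclideanSpace ℝ (Fin d))
    (n : Ω → EuclideanSpace ℝ (Fin d)) :
    Fin N ⊕ (Fin N × Fin M) ⊕ Unit → Ω → ℝ × EuclideanSpace ℝ (Fin d)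
  | Sum.inl i => fun ω => (h i ω, 0)
  | Sum.inr (Sum.inl (i, m)) => fun ω => (0, X i m ω)
  | Sum.inr (Sum.inr _) => fun ω => (0, n ω)

section HilbertMoments

variable {Ω E : Type*} [MeasurableSpace Ω] {P : Measure Ω}
  [NormedAddCommGroup E] [InnerProductSpace ℝ E]

lemma integrable_inner_of_memLp_two {f g : Ω → E} (hf : MemLp f 2 P) (hg : MemLp g 2 P) :
    Integrable (fun ω => inner ℝ (f ω) (g ω)) P :=
  memLp_one_iff_integrable.1 ((innerSL ℝ).memLp_of_bilin 1 hf hg)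

variable [MeasurableSpace E] [BorelSpace E]

lemma integral_norm_sq_sum_of_pairwise_indepFun [CompleteSpace E] [IsProbabilityMeasure P]
    {ι : Type*} [Fintype ι] {Z : ι → Ω → E} (hZ : ∀ i, MemLp (Z i) 2 P)
    (hind : Pairwise fun i j => IndepFun (Z i) (Z j) P) :
    ∫ ω, ‖∑ i, Z i ω‖ ^ 2 ∂P =
      ∑ i, (∫ ω, ‖Z i ω‖ ^ 2 ∂P - ‖∫ ω, Z i ω ∂P‖ ^ 2) + ‖∑ i, ∫ ω, Z i ω ∂P‖ ^ 2 := by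
  classical
  have norm_sq_sum (z : ι → E) : ‖∑ i, z i‖ ^ 2 = ∑ i, ∑ j, inner ℝ (z i) (z j) := by
    simp_rw [← real_inner_self_eq_norm_sq, sum_inner, inner_sum]
  have integrable_cross (i j : ι) : Integrable (fun ω => inner ℝ (Z i ω) (Z j ω)) P :=
    integrable_inner_of_memLp_two (hZ i) (hZ j)
  have integral_cross (i j : ι) : ∫ ω, inner ℝ (Z i ω) (Z j ω) ∂P =
      (if i = j then ∫ ω, ‖Z i ω‖ ^ 2 ∂P - ‖∫ ω, Z i ω ∂P‖ ^ 2 else 0) +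
        inner ℝ (∫ ω, Z i ω ∂P) (∫ ω, Z j ω ∂P) := by
    split_ifs with hij
    · subst hij
      simp
    · rw [zero_add]
      exact (hind hij).integral_bilin ((hZ i).integrable one_le_two)
        ((hZ j).integrable one_le_two) (innerSL ℝ)
  simp_rw [norm_sq_sum]
  rw [integral_finsetSum _ fun i _ => integrable_finsetSum _ fun j _ => integrable_cross i j]
  simp_rw [integral_finsetSum _ fun j _ => integrable_cross _ j, integral_cross,
    Finset.sum_add_distrib, Finset.sum_ite_eq, Finset.mem_univ, if_true]

end HilbertMoments

section IndependentScaling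

variable {Ω E : Type*} [MeasurableSpace Ω] {P : Measure Ω} [NormedAddCommGroup E]
  [MeasurableSpace E] [BorelSpace E] {c : Ω → ℝ} {f : Ω → E}

lemma indepFun_sq_norm_sq (hind : IndepFun c f P) :
    IndepFun (fun ω => c ω ^ 2) (fun ω => ‖f ω‖ ^ 2) P :=
  hind.comp (φ := fun x : ℝ => x ^ 2) (ψ := fun x : E => ‖x‖ ^ 2) (by fun_prop) (by fun_prop)

variable [NormedSpace ℝ E]

lemma memLp_two_smul_of_indepFun (hc : MemLp c 2 P) (hf : MemLp f 2 P) (hind : IndepFun c f P) :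
    MemLp (fun ω => c ω • f ω) 2 P := by
  refine (memLp_two_iff_integrable_sq_norm
    (hc.aestronglyMeasurable.smul hf.aestronglyMeasurable)).2 ?_
  simp_rw [Pi.smul_apply', norm_smul, mul_pow, Real.norm_eq_abs, sq_abs]
  exact (indepFun_sq_norm_sq hind).integrable_mul hc.integrable_sq hf.norm.integrable_sq

lemma integral_norm_smul_sq_of_indepFun (hc : MemLp c 2 P) (hf : MemLp f 2 P)
    (hind : IndepFun c f P) :
    ∫ ω, ‖c ω • f ω‖ ^ 2 ∂P = (∫ ω, c ω ^ 2 ∂P) * ∫ ω, ‖f ω‖ ^ 2 ∂P := by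
  simp_rw [norm_smul, mul_pow, Real.norm_eq_abs, sq_abs]
  exact (indepFun_sq_norm_sq hind).integral_fun_mul_eq_mul_integral
    hc.integrable_sq.aestronglyMeasurable hf.norm.integrable_sq.aestronglyMeasurable

end IndependentScaling

section KernelIndependence

variable {α Ω ι : Type*} {mα : MeasurableSpace α} {mΩ : MeasurableSpace Ω} [Countable ι]
  {κ : Kernel α Ω} {μ : Measure α}

lemma ae_iIndepSets_of_kernel {π : ι → Set (Set Ω)} (hπ : ∀ i, (π i).Countable)
    (hind : Kernel.iIndepSets π κ μ) : ∀ᵐ a ∂μ, iIndepSets π (κ a) := by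
  have (i : ι) : Countable (π i) := (hπ i).to_subtype
  have product_formula : ∀ᵐ a ∂μ, ∀ (s : Finset ι) (f : ∀ i : s, π i),
      κ a (⋂ i : s, (f i : Set Ω)) = ∏ i : s, κ a (f i) := by
    refine ae_all_iff.2 fun s => ae_all_iff.2 fun f => ?_
    classical
    let F (i : ι) : Set Ω := if hi : i ∈ s then f ⟨i, hi⟩ else ∅
    have hF (i : s) : F i = f i := dif_pos i.2
    filter_upwards [hind s (f := F) fun i hi => hF ⟨i, hi⟩ ▸ (f ⟨i, hi⟩).2] with a ha
    rw [← Set.iInter_subtype (· ∈ s) fun i => F i, ← Finset.prod_coe_sort] at ha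
    simpa only [hF] using ha
  filter_upwards [product_formula] with a ha
  refine (iIndepSets_iff _ _).2 fun s f hf => ?_
  rw [← Set.iInter_subtype (· ∈ s) fun i => f i, ← Finset.prod_coe_sort]
  exact ha s fun i => ⟨f i, hf i i.2⟩

lemma exists_countable_isPiSystem_generateFrom (β : Type*) [m : MeasurableSpace β]
    [MeasurableSpace.CountablyGenerated β] :
    ∃ A : Set (Set β), A.Countable ∧ IsPiSystem A ∧ m = MeasurableSpace.generateFrom A := by
  obtain ⟨A, hA, hm⟩ := MeasurableSpace.CountablyGenerated.isCountablyGenerated (α := β)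
  exact ⟨generateSetAlgebra A, countable_generateSetAlgebra hA,
    fun s hs t ht _ => isSetAlgebra_generateSetAlgebra.inter_mem hs ht,
    hm.trans generateFrom_generateSetAlgebra_eq.symm⟩

variable {β : ι → Type*} [∀ i, MeasurableSpace (β i)]
  [∀ i, MeasurableSpace.CountablyGenerated (β i)] {f : ∀ i, Ω → β i}

lemma ae_iIndepFun_of_kernel_of_measurable (hf : ∀ i, Measurable (f i))
    (hind : Kernel.iIndepFun f κ μ) : ∀ᵐ a ∂μ, iIndepFun f (κ a) := by
  choose A hA hA_pi hA_gen using fun i => exists_countable_isPiSystem_generateFrom (β i)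
  let π (i : ι) : Set (Set Ω) := {t | ∃ s ∈ A i, f i ⁻¹' s = t}
  have comap_eq (i : ι) :
      MeasurableSpace.comap (f i) inferInstance = MeasurableSpace.generateFrom (π i) :=
    (congrArg _ (hA_gen i)).trans MeasurableSpace.comap_generateFrom
  have hπ : Kernel.iIndepSets π κ μ := fun s t ht =>
    hind s fun i hi => (comap_eq i).ge _ (MeasurableSpace.measurableSet_generateFrom (ht i hi))
  filter_upwards [ae_iIndepSets_of_kernel (fun i => (hA i).image _) hπ] with a ha
  exact iIndepSets.iIndep (fun i => (hf i).comap_le) π (fun i => (hA_pi i).comap _) comap_eq ha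

lemma ae_iIndepFun_of_kernel (hf : ∀ i, AEMeasurable (f i) (κ ∘ₘ μ))
    (hind : Kernel.iIndepFun f κ μ) : ∀ᵐ a ∂μ, iIndepFun f (κ a) := by
  have eq_mk (i : ι) : ∀ᵐ a ∂μ, f i =ᵐ[κ a] (hf i).mk :=
    Measure.ae_ae_of_ae_comp (hf i).ae_eq_mk
  filter_upwards [ae_all_iff.2 eq_mk, ae_iIndepFun_of_kernel_of_measurable
    (fun i => (hf i).measurable_mk) (hind.congr' eq_mk)] with a h_eq h_ind
  exact h_ind.congr fun i => (h_eq i).symm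

end KernelIndependence

section ConditionalLaw

lemma condExp_comp_of_indep {Ω : Type*} {m : MeasurableSpace Ω} [mΩ : MeasurableSpace Ω]
    {μ : Measure Ω} [IsProbabilityMeasure μ] (hm : m ≤ mΩ) {β F : Type*} [mβ : MeasurableSpace β]
    [NormedAddCommGroup F] [NormedSpace ℝ F] [CompleteSpace F]
    {Y : Ω → β} (hY : AEMeasurable Y μ) (hind : Indep (mβ.comap Y) m μ)
    {φ : β → F} (hφ : StronglyMeasurable φ) :
    μ[fun ω => φ (Y ω) | m] =ᵐ[μ] fun _ => ∫ ω, φ (Y ω) ∂μ := by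
  have hind_mk : Indep (mβ.comap (hY.mk Y)) m μ := by
    have h : @IndepFun Ω β Ω mΩ mβ m Y id μ := by
      rwa [@IndepFun_iff_Indep _ _ _ mΩ mβ m, MeasurableSpace.comap_id]
    have h_mk := @IndepFun.congr _ _ _ mΩ _ _ _ mβ m _ _ h hY.ae_eq_mk Filter.EventuallyEq.rfl
    rwa [@IndepFun_iff_Indep _ _ _ mΩ mβ m, MeasurableSpace.comap_id] at h_mk
  have eq_mk : (fun ω => φ (Y ω)) =ᵐ[μ] fun ω => φ (hY.mk Y ω) := hY.ae_eq_mk.fun_comp φ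
  rw [integral_congr_ae eq_mk]
  exact (condExp_congr_ae eq_mk).trans <| condExp_indep_eq hY.measurable_mk.comap_le hm
    (hφ.comp_measurable (comap_measurable _)) hind_mk

variable {Ω : Type*} {m : MeasurableSpace Ω} [mΩ : MeasurableSpace Ω] [StandardBorelSpace Ω]
  {μ : Measure Ω}

lemma ae_iIndepFun_condExpKernel [IsFiniteMeasure μ] (hm : m ≤ mΩ) {ι : Type*} [Countable ι]
    {β : ι → Type*} [∀ i, MeasurableSpace (β i)]
    [∀ i, MeasurableSpace.CountablyGenerated (β i)] {f : ∀ i, Ω → β i}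
    (hf : ∀ i, AEMeasurable (f i) μ) (hind : iCondIndepFun m hm f μ) :
    ∀ᵐ ω ∂μ, iIndepFun f (condExpKernel μ m ω) :=
  ae_of_ae_trim hm <|
    ae_iIndepFun_of_kernel (fun i => (condExpKernel_comp_trim (μ := μ) hm).symm ▸ hf i) hind

lemma ae_memLp_condExpKernel [IsFiniteMeasure μ] (hm : m ≤ mΩ) {F : Type*} [NormedAddCommGroup F]
    {f : Ω → F} (hf : MemLp f 2 μ) : ∀ᵐ ω ∂μ, MemLp f 2 (condExpKernel μ m ω) := by
  filter_upwards [hf.norm.integrable_sq.condExpKernel_ae (m := m),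
    ae_of_ae_trim hm (aestronglyMeasurable_trim_condExpKernel hm hf.aestronglyMeasurable)]
    with ω h_int h_eq
  exact (memLp_two_iff_integrable_sq_norm
    ⟨_, hf.aestronglyMeasurable.stronglyMeasurable_mk, h_eq⟩).2 h_int

lemma ae_integral_condExpKernel_eq_of_indep [IsProbabilityMeasure μ] (hm : m ≤ mΩ) {β F : Type*}
    [mβ : MeasurableSpace β] [NormedAddCommGroup F] [NormedSpace ℝ F] [CompleteSpace F]
    {Y : Ω → β} (hY : AEMeasurable Y μ) (hind : Indep (mβ.comap Y) m μ)
    {φ : β → F} (hφ : StronglyMeasurable φ) (hint : Integrable (fun ω => φ (Y ω)) μ) :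
    ∀ᵐ ω ∂μ, ∫ y, φ (Y y) ∂condExpKernel μ m ω = ∫ y, φ (Y y) ∂μ := by
  filter_upwards [condExp_ae_eq_integral_condExpKernel hm hint,
    condExp_comp_of_indep hm hY hind hφ] with ω h_kernel h_const
  rw [← h_kernel, h_const]

lemma ae_moments_condExpKernel_of_indep [IsProbabilityMeasure μ] (hm : m ≤ mΩ) {F : Type*}
    [NormedAddCommGroup F] [NormedSpace ℝ F] [CompleteSpace F] [MeasurableSpace F] [BorelSpace F]
    [SecondCountableTopology F] {Y : Ω → F} (hY : MemLp Y 2 μ)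
    (hind : Indep (MeasurableSpace.comap Y inferInstance) m μ) :
    ∀ᵐ ω ∂μ, ∫ y, Y y ∂condExpKernel μ m ω = ∫ y, Y y ∂μ ∧
      ∫ y, ‖Y y‖ ^ 2 ∂condExpKernel μ m ω = ∫ y, ‖Y y‖ ^ 2 ∂μ :=
  have hY_meas : AEMeasurable Y μ := hY.aestronglyMeasurable.aemeasurable
  (ae_integral_condExpKernel_eq_of_indep hm hY_meas hind stronglyMeasurable_id
    (hY.integrable one_le_two)).and <|
    ae_integral_condExpKernel_eq_of_indep hm hY_meas hind (stronglyMeasurable_id.norm.pow 2)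
      hY.norm.integrable_sq

lemma ae_moments_condExpKernel_of_condExp [IsFiniteMeasure μ] (hm : m ≤ mΩ) {F : Type*}
    [NormedAddCommGroup F] [NormedSpace ℝ F] [CompleteSpace F] {f g : Ω → F} {B : Ω → ℝ}
    (hf : MemLp f 2 μ) (hmean : μ[f | m] =ᵐ[μ] g)
    (hsq : ∀ᵐ ω ∂μ, (μ[fun y => ‖f y‖ ^ 2 | m]) ω ≤ B ω) :
    ∀ᵐ ω ∂μ, ∫ y, f y ∂condExpKernel μ m ω = g ω ∧
      ∫ y, ‖f y‖ ^ 2 ∂condExpKernel μ m ω ≤ B ω := by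
  filter_upwards [condExp_ae_eq_integral_condExpKernel hm (hf.integrable one_le_two), hmean,
    condExp_ae_eq_integral_condExpKernel hm hf.norm.integrable_sq, hsq]
    with ω h_kernel h_mean h_kernel_sq h_sq
  exact ⟨h_kernel.symm.trans h_mean, h_kernel_sq.ge.trans h_sq⟩

lemma comap_condExpKernel_comp [IsFiniteMeasure μ] (hm : m ≤ mΩ) :
    (condExpKernel μ m).comap id (measurable_id'' hm) ∘ₘ μ = μ := by
  ext s hs
  rw [Measure.bind_apply hs (Kernel.aemeasurable _)]
  simp only [Kernel.coe_comap, Function.comp_apply, id_eq]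
  rw [← lintegral_trim hm ((condExpKernel μ m).measurable_coe hs),
    ← Measure.bind_apply hs (Kernel.aemeasurable _), condExpKernel_comp_trim hm]

lemma memLp_two_of_condExpKernel [IsFiniteMeasure μ] (hm : m ≤ mΩ) {F : Type*}
    [NormedAddCommGroup F] {f : Ω → F} (hf : AEStronglyMeasurable f μ) {B : Ω → ℝ}
    (hB : Integrable B μ) (hmem : ∀ᵐ ω ∂μ, MemLp f 2 (condExpKernel μ m ω))
    (hle : ∀ᵐ ω ∂μ, ∫ y, ‖f y‖ ^ 2 ∂condExpKernel μ m ω ≤ B ω) : MemLp f 2 μ := by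
  have hf_sq : AEStronglyMeasurable (fun y => ‖f y‖ ^ 2) μ := hf.norm.pow 2
  have sq_integral_le : ∀ᵐ ω ∂μ, ‖∫ y, ‖‖f y‖ ^ 2‖ ∂condExpKernel μ m ω‖ ≤ B ω := by
    filter_upwards [hle] with ω hω
    simp_rw [norm_pow, norm_norm]
    rwa [Real.norm_of_nonneg (integral_nonneg fun _ => by positivity)]
  have sq_integrable_iff := Measure.integrable_comp_iff (f := fun y => ‖f y‖ ^ 2) <|
    (comap_condExpKernel_comp (μ := μ) hm).symm ▸ hf_sq
  rw [comap_condExpKernel_comp hm] at sq_integrable_iff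
  refine (memLp_two_iff_integrable_sq_norm hf).2 <| sq_integrable_iff.2
    ⟨?_, hB.mono' hf_sq.norm.integral_condExpKernel sq_integral_le⟩
  filter_upwards [hmem] with ω hω using hω.norm.integrable_sq

lemma integral_le_integral_of_condExpKernel_le [IsFiniteMeasure μ] (hm : m ≤ mΩ) {f B : Ω → ℝ}
    (hf : Integrable f μ) (hB : Integrable B μ)
    (hle : ∀ᵐ ω ∂μ, ∫ y, f y ∂condExpKernel μ m ω ≤ B ω) :
    ∫ ω, f ω ∂μ ≤ ∫ ω, B ω ∂μ := by
  rw [← integral_condExp hm]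
  refine integral_mono_ae integrable_condExp hB ?_
  filter_upwards [condExp_ae_eq_integral_condExpKernel hm hf, hle] with ω h_eq h_le
  exact h_eq.trans_le h_le

lemma integral_inner_of_integral_condExpKernel_eq_smul [IsFiniteMeasure μ] (hm : m ≤ mΩ)
    {E : Type*} [NormedAddCommGroup E] [InnerProductSpace ℝ E] [CompleteSpace E]
    {g f : Ω → E} (hg_meas : StronglyMeasurable[m] g) (hg : MemLp g 2 μ) (hf : MemLp f 2 μ)
    {a : ℝ} (hmean : ∀ᵐ ω ∂μ, ∫ y, f y ∂condExpKernel μ m ω = a • g ω) :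
    ∫ ω, inner ℝ (g ω) (f ω) ∂μ = a * ∫ ω, ‖g ω‖ ^ 2 ∂μ := by
  have hf_int : Integrable f μ := hf.integrable one_le_two
  have pull_out : μ[fun ω => inner ℝ (g ω) (f ω) | m] =ᵐ[μ] fun ω => inner ℝ (g ω) (μ[f | m] ω) :=
    condExp_bilin_of_stronglyMeasurable_left (innerSL ℝ) hg_meas
      (integrable_inner_of_memLp_two hg hf) hf_int
  rw [← integral_condExp hm, ← integral_const_mul]
  refine integral_congr_ae ?_
  filter_upwards [pull_out, condExp_ae_eq_integral_condExpKernel hm hf_int, hmean]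
    with ω h_pull h_kernel h_mean
  rw [h_pull, h_kernel, h_mean, inner_smul_right, real_inner_self_eq_norm_sq]

end ConditionalLaw

section OverTheAirRound

/-- The empirical mean of the stochastic gradients in one agent's minibatch. -/
noncomputable def minibatchMean {M : ℕ} {Ω E : Type*} [AddCommGroup E] [Module ℝ E]
    (X : Fin M → Ω → E) (ω : Ω) : E :=
  (1 / (M : ℝ)) • ∑ j, X j ω

/-- The signal the server receives when the agents transmit their minibatch means simultaneously:
each mean is scaled by the agent's channel gain, and receiver noise is added to the
superposition. -/
noncomputable def receivedSignal {N M : ℕ} {Ω E : Type*} [AddCommGroup E] [Module ℝ E]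
    (h : Fin N → Ω → ℝ) (X : Fin N → Fin M → Ω → E) (n : Ω → E) (ω : Ω) : E :=
  (∑ i, h i ω • minibatchMean (X i) ω) + n ω

/-- What each transmitter adds to the received signal, the receiver noise being treated as one
more transmitter, indexed by `none`. -/
noncomputable def contribution {N M : ℕ} {Ω E : Type*} [AddCommGroup E] [Module ℝ E]
    (h : Fin N → Ω → ℝ) (X : Fin N → Fin M → Ω → E) (n : Ω → E) : Option (Fin N) → Ω → E
  | some i => fun ω => h i ω • minibatchMean (X i) ω
  | none => n

/-- The counterpart of `otaFam` for gradients in an arbitrary space. -/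
def signalFamily {N M : ℕ} {Ω E : Type*} [Zero E]
    (h : Fin N → Ω → ℝ) (X : Fin N → Fin M → Ω → E) (n : Ω → E) :
    Fin N ⊕ (Fin N × Fin M) ⊕ Unit → Ω → ℝ × E
  | Sum.inl i => fun ω => (h i ω, 0)
  | Sum.inr (Sum.inl (i, j)) => fun ω => (0, X i j ω)
  | Sum.inr (Sum.inr _) => fun ω => (0, n ω)

lemma otaFam_eq_signalFamily {d N M : ℕ} {Ω : Type*} (h : Fin N → Ω → ℝ)
    (X : Fin N → Fin M → Ω → EuclideanSpace ℝ (Fin d)) (n : Ω → EuclideanSpace ℝ (Fin d)) :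
    otaFam h X n = signalFamily h X n := rfl

/-- The transmitter whose contribution is built from a given member of `signalFamily`. -/
def transmitter {N M : ℕ} : Fin N ⊕ (Fin N × Fin M) ⊕ Unit → Option (Fin N)
  | Sum.inl i => some i
  | Sum.inr (Sum.inl (i, _)) => some i
  | Sum.inr (Sum.inr _) => none

/-- The members of `signalFamily` from which the contribution of a given transmitter is built. -/
def signalsOf {N M : ℕ} (o : Option (Fin N)) : Finset (Fin N ⊕ (Fin N × Fin M) ⊕ Unit) :=
  Finset.univ.filter fun a => transmitter a = o

lemma receivedSignal_eq_sum_contribution {N M : ℕ} {Ω E : Type*} [AddCommGroup E] [Module ℝ E]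
    (h : Fin N → Ω → ℝ) (X : Fin N → Fin M → Ω → E) (n : Ω → E) (ω : Ω) :
    receivedSignal h X n ω = ∑ o, contribution h X n o ω := by
  rw [Fintype.sum_option, add_comm]
  rfl

variable {N M : ℕ} {Ω E : Type*} [MeasurableSpace Ω] [NormedAddCommGroup E]
  [MeasurableSpace E] {P : Measure Ω}
  {h : Fin N → Ω → ℝ} {X : Fin N → Fin M → Ω → E} {n : Ω → E}

lemma aemeasurable_signalFamily [BorelSpace E]
    (hh : ∀ i, AEStronglyMeasurable (h i) P) (hX : ∀ i j, AEStronglyMeasurable (X i j) P)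
    (hn : AEStronglyMeasurable n P) (a : Fin N ⊕ (Fin N × Fin M) ⊕ Unit) :
    AEMeasurable (signalFamily h X n a) P := by
  rcases a with i | ⟨i, j⟩ | _
  · exact (hh i).aemeasurable.prodMk aemeasurable_const
  · exact aemeasurable_const.prodMk (hX i j).aemeasurable
  · exact aemeasurable_const.prodMk hn.aemeasurable

variable [NormedSpace ℝ E]

omit [MeasurableSpace Ω] in
variable (h X n) in
lemma exists_measurable_comp_eq_contribution [BorelSpace E] [SecondCountableTopology E]
    (o : Option (Fin N)) : ∃ φ : (signalsOf (M := M) o → ℝ × E) → E,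
      Measurable φ ∧ contribution h X n o = φ ∘ fun ω a => signalFamily h X n a ω := by
  have mem {a : Fin N ⊕ (Fin N × Fin M) ⊕ Unit} (ha : transmitter a = o) : a ∈ signalsOf o :=
    Finset.mem_filter.2 ⟨Finset.mem_univ a, ha⟩
  cases o with
  | some i =>
    exact ⟨fun p => (p ⟨Sum.inl i, mem rfl⟩).1 •
      ((1 / (M : ℝ)) • ∑ j, (p ⟨Sum.inr (Sum.inl (i, j)), mem rfl⟩).2), by fun_prop, rfl⟩
  | none => exact ⟨fun p => (p ⟨Sum.inr (Sum.inr ()), mem rfl⟩).2, by fun_prop, rfl⟩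

/-- One communication round under the law `P`: the channel gains, stochastic gradients and noise
are mutually independent and square integrable, with the prescribed means and bounds on the second
moments. In the model `P` is the conditional law given the past and `g` is the true gradient. -/
structure OverTheAirRound (P : Measure Ω) (h : Fin N → Ω → ℝ) (X : Fin N → Fin M → Ω → E)
    (n : Ω → E) (g : E) (m_h σ_h2 V2 σbar2 : ℝ) : Prop where
  iIndepFun : iIndepFun (signalFamily h X n) P
  memLp_channel : ∀ i, MemLp (h i) 2 P
  memLp_sample : ∀ i j, MemLp (X i j) 2 P
  memLp_noise : MemLp n 2 P
  integral_channel : ∀ i, ∫ ω, h i ω ∂P = m_h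
  integral_channel_sq_le : ∀ i, ∫ ω, h i ω ^ 2 ∂P ≤ σ_h2
  integral_noise : ∫ ω, n ω ∂P = 0
  integral_norm_noise_sq_le : ∫ ω, ‖n ω‖ ^ 2 ∂P ≤ σbar2
  integral_sample : ∀ i j, ∫ ω, X i j ω ∂P = g
  integral_norm_sample_sq_le : ∀ i j, ∫ ω, ‖X i j ω‖ ^ 2 ∂P ≤ V2

namespace OverTheAirRound

variable {g : E} {m_h σ_h2 V2 σbar2 : ℝ}

lemma memLp_minibatchMean (H : OverTheAirRound P h X n g m_h σ_h2 V2 σbar2) (i : Fin N) :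
    MemLp (minibatchMean (X i)) 2 P :=
  (memLp_finsetSum _ fun j _ => H.memLp_sample i j).const_smul _

variable [BorelSpace E]

lemma indepFun_restrict (H : OverTheAirRound P h X n g m_h σ_h2 V2 σbar2)
    {S T : Finset (Fin N ⊕ (Fin N × Fin M) ⊕ Unit)} (hST : Disjoint S T) :
    IndepFun (fun ω (a : S) => signalFamily h X n a ω) (fun ω (a : T) => signalFamily h X n a ω)
      P :=
  H.iIndepFun.indepFun_finset₀ S T hST <| aemeasurable_signalFamily
    (fun i => (H.memLp_channel i).aestronglyMeasurable)
    (fun i j => (H.memLp_sample i j).aestronglyMeasurable) H.memLp_noise.aestronglyMeasurable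

variable [SecondCountableTopology E]

lemma indepFun_channel_minibatchMean (H : OverTheAirRound P h X n g m_h σ_h2 V2 σbar2)
    (i : Fin N) : IndepFun (h i) (minibatchMean (X i)) P := by
  classical
  let S : Finset (Fin N ⊕ (Fin N × Fin M) ⊕ Unit) := {Sum.inl i}
  let T : Finset (Fin N ⊕ (Fin N × Fin M) ⊕ Unit) :=
    Finset.univ.image fun j => Sum.inr (Sum.inl (i, j))
  have memT (j : Fin M) : Sum.inr (Sum.inl (i, j)) ∈ T :=
    Finset.mem_image_of_mem _ (Finset.mem_univ j)
  have hST : Disjoint S T := by simp [S, T]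
  let channel (p : S → ℝ × E) : ℝ := (p ⟨Sum.inl i, Finset.mem_singleton_self _⟩).1
  let mean (p : T → ℝ × E) : E := (1 / (M : ℝ)) • ∑ j, (p ⟨_, memT j⟩).2
  exact (H.indepFun_restrict hST).comp (φ := channel) (ψ := mean) (by fun_prop) (by fun_prop)

lemma pairwise_indepFun_contribution (H : OverTheAirRound P h X n g m_h σ_h2 V2 σbar2) :
    Pairwise fun o o' => IndepFun (contribution h X n o) (contribution h X n o') P := by
  intro o o' hne
  obtain ⟨φ, hφ, h_eq⟩ := exists_measurable_comp_eq_contribution h X n o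
  obtain ⟨ψ, hψ, h_eq'⟩ := exists_measurable_comp_eq_contribution h X n o'
  have disjoint_signals : Disjoint (signalsOf (M := M) o) (signalsOf o') :=
    Finset.disjoint_filter.2 fun a _ ha ha' => hne (ha.symm.trans ha')
  rw [h_eq, h_eq']
  exact (H.indepFun_restrict disjoint_signals).comp hφ hψ

lemma memLp_contribution (H : OverTheAirRound P h X n g m_h σ_h2 V2 σbar2) :
    ∀ o, MemLp (contribution h X n o) 2 P
  | some i => memLp_two_smul_of_indepFun (H.memLp_channel i) (H.memLp_minibatchMean i)
      (H.indepFun_channel_minibatchMean i)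
  | none => H.memLp_noise

lemma memLp_receivedSignal (H : OverTheAirRound P h X n g m_h σ_h2 V2 σbar2) :
    MemLp (receivedSignal h X n) 2 P := by
  rw [funext (receivedSignal_eq_sum_contribution h X n)]
  exact memLp_finsetSum _ fun o _ => H.memLp_contribution o

variable [IsFiniteMeasure P]

omit [BorelSpace E] [SecondCountableTopology E] in
lemma integral_minibatchMean (H : OverTheAirRound P h X n g m_h σ_h2 V2 σbar2) (hM : 0 < M)
    (i : Fin N) : ∫ ω, minibatchMean (X i) ω ∂P = g := by
  have hM' : (M : ℝ) ≠ 0 := by positivity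
  simp_rw [minibatchMean, integral_smul,
    integral_finsetSum _ fun j _ => (H.memLp_sample i j).integrable one_le_two, H.integral_sample,
    Finset.sum_const, Finset.card_univ, Fintype.card_fin, ← Nat.cast_smul_eq_nsmul ℝ, smul_smul,
    one_div_mul_cancel hM', one_smul]

lemma integral_contribution_some (H : OverTheAirRound P h X n g m_h σ_h2 V2 σbar2) (hM : 0 < M)
    (i : Fin N) : ∫ ω, contribution h X n (some i) ω ∂P = m_h • g := by
  rw [← H.integral_channel i, ← H.integral_minibatchMean hM i]
  exact (H.indepFun_channel_minibatchMean i).integral_fun_smul_eq_smul_integral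
    (H.memLp_channel i).aestronglyMeasurable (H.memLp_minibatchMean i).aestronglyMeasurable

lemma sum_integral_contribution (H : OverTheAirRound P h X n g m_h σ_h2 V2 σbar2) (hM : 0 < M) :
    ∑ o, ∫ ω, contribution h X n o ω ∂P = (N * m_h) • g := by
  simp_rw [Fintype.sum_option, H.integral_contribution_some hM, Finset.sum_const, Finset.card_univ,
    Fintype.card_fin, ← Nat.cast_smul_eq_nsmul ℝ, smul_smul]
  exact add_eq_right.2 H.integral_noise

lemma integral_receivedSignal (H : OverTheAirRound P h X n g m_h σ_h2 V2 σbar2) (hM : 0 < M) :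
    ∫ ω, receivedSignal h X n ω ∂P = (N * m_h) • g := by
  simp_rw [receivedSignal_eq_sum_contribution,
    integral_finsetSum _ fun o _ => (H.memLp_contribution o).integrable one_le_two]
  exact H.sum_integral_contribution hM

end OverTheAirRound

end OverTheAirRound

section OverTheAirSecondMoment

variable {N M : ℕ} {Ω E : Type*} [MeasurableSpace Ω] [NormedAddCommGroup E]
  [InnerProductSpace ℝ E] [CompleteSpace E] [MeasurableSpace E] [BorelSpace E] {P : Measure Ω}
  [IsProbabilityMeasure P] {h : Fin N → Ω → ℝ} {X : Fin N → Fin M → Ω → E} {n : Ω → E}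
  {g : E} {m_h σ_h2 V2 σbar2 : ℝ}

namespace OverTheAirRound

lemma integral_norm_minibatchMean_sq_le
    (H : OverTheAirRound P h X n g m_h σ_h2 V2 σbar2) (hM : 0 < M) (i : Fin N) :
    ∫ ω, ‖minibatchMean (X i) ω‖ ^ 2 ∂P ≤ V2 / M + (M - 1) / M * ‖g‖ ^ 2 := by
  have hM' : (0 : ℝ) < M := by positivity
  have hind : Pairwise fun j j' => IndepFun (X i j) (X i j') P := fun j j' hne =>
    (H.iIndepFun.indepFun (i := Sum.inr (Sum.inl (i, j))) (j := Sum.inr (Sum.inl (i, j')))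
      (by simpa using hne)).comp measurable_snd measurable_snd
  simp_rw [minibatchMean, norm_smul, mul_pow, integral_const_mul,
    integral_norm_sq_sum_of_pairwise_indepFun (H.memLp_sample i) hind, H.integral_sample,
    Finset.sum_const, Finset.card_univ, Fintype.card_fin, ← Nat.cast_smul_eq_nsmul ℝ, norm_smul]
  calc ‖1 / (M : ℝ)‖ ^ 2 * (∑ j, (∫ ω, ‖X i j ω‖ ^ 2 ∂P - ‖g‖ ^ 2) + (‖(M : ℝ)‖ * ‖g‖) ^ 2)
      ≤ ‖1 / (M : ℝ)‖ ^ 2 * (∑ _j : Fin M, (V2 - ‖g‖ ^ 2) + (‖(M : ℝ)‖ * ‖g‖) ^ 2) := by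
        gcongr with j
        exact H.integral_norm_sample_sq_le i j
    _ = V2 / M + (M - 1) / M * ‖g‖ ^ 2 := by
        rw [Finset.sum_const, Finset.card_univ, Fintype.card_fin, nsmul_eq_mul,
          Real.norm_of_nonneg (by positivity), Real.norm_of_nonneg hM'.le]
        field_simp
        ring

variable [SecondCountableTopology E]

lemma integral_norm_contribution_some_sq_le (H : OverTheAirRound P h X n g m_h σ_h2 V2 σbar2)
    (hM : 0 < M) (i : Fin N) :
    ∫ ω, ‖contribution h X n (some i) ω‖ ^ 2 ∂P ≤
      σ_h2 * (V2 / M + (M - 1) / M * ‖g‖ ^ 2) := by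
  have hσ : 0 ≤ σ_h2 :=
    (integral_nonneg fun _ => sq_nonneg _).trans (H.integral_channel_sq_le i)
  exact (integral_norm_smul_sq_of_indepFun (H.memLp_channel i) (H.memLp_minibatchMean i)
    (H.indepFun_channel_minibatchMean i)).trans_le <|
    mul_le_mul (H.integral_channel_sq_le i) (H.integral_norm_minibatchMean_sq_le hM i)
      (integral_nonneg fun _ => sq_nonneg _) hσ

lemma integral_norm_receivedSignal_sq_le (H : OverTheAirRound P h X n g m_h σ_h2 V2 σbar2)
    (hM : 0 < M) :
    ∫ ω, ‖receivedSignal h X n ω‖ ^ 2 ∂P ≤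
      (N * (σ_h2 * ((M - 1) / M)) + N * (N - 1) * m_h ^ 2) * ‖g‖ ^ 2 +
        (N * (σ_h2 * (V2 / M)) + σbar2) := by
  have variance_some_le (i : Fin N) :
      ∫ ω, ‖contribution h X n (some i) ω‖ ^ 2 ∂P
          - ‖∫ ω, contribution h X n (some i) ω ∂P‖ ^ 2 ≤
        σ_h2 * (V2 / M + (M - 1) / M * ‖g‖ ^ 2) - m_h ^ 2 * ‖g‖ ^ 2 := by
    rw [H.integral_contribution_some hM, norm_smul, mul_pow, Real.norm_eq_abs, sq_abs]
    exact sub_le_sub_right (H.integral_norm_contribution_some_sq_le hM i) _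
  have variance_none_le :
      ∫ ω, ‖contribution h X n none ω‖ ^ 2 ∂P - ‖∫ ω, contribution h X n none ω ∂P‖ ^ 2 ≤
        σbar2 :=
    (sub_le_self _ (sq_nonneg _)).trans H.integral_norm_noise_sq_le
  simp_rw [receivedSignal_eq_sum_contribution]
  rw [integral_norm_sq_sum_of_pairwise_indepFun H.memLp_contribution
      H.pairwise_indepFun_contribution, H.sum_integral_contribution hM, Fintype.sum_option,
    norm_smul, mul_pow, Real.norm_eq_abs, sq_abs]
  grw [variance_none_le, Finset.sum_le_sum fun i _ => variance_some_le i]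
  rw [Finset.sum_const, Finset.card_univ, Fintype.card_fin, nsmul_eq_mul]
  exact le_of_eq (by ring)

end OverTheAirRound

end OverTheAirSecondMoment

lemma ae_overTheAirRound_condExpKernel {N M : ℕ} {Ω E : Type*} {m : MeasurableSpace Ω}
    [mΩ : MeasurableSpace Ω] [StandardBorelSpace Ω] {μ : Measure Ω} [IsProbabilityMeasure μ]
    [NormedAddCommGroup E] [NormedSpace ℝ E] [CompleteSpace E] [MeasurableSpace E] [BorelSpace E]
    [SecondCountableTopology E] (hm : m ≤ mΩ)
    {h : Fin N → Ω → ℝ} {X : Fin N → Fin M → Ω → E} {n : Ω → E} {g : Ω → E}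
    {m_h σ_h2 V2 σbar2 : ℝ}
    (hh : ∀ i, MemLp (h i) 2 μ) (hX : ∀ i j, MemLp (X i j) 2 μ) (hn : MemLp n 2 μ)
    (hcondind : iCondIndepFun m hm (signalFamily h X n) μ)
    (hhind : ∀ i, Indep (MeasurableSpace.comap (h i) inferInstance) m μ)
    (hnind : Indep (MeasurableSpace.comap n inferInstance) m μ)
    (hEh : ∀ i, ∫ ω, h i ω ∂μ = m_h) (hEh2 : ∀ i, ∫ ω, h i ω ^ 2 ∂μ ≤ σ_h2)
    (hEn : ∫ ω, n ω ∂μ = 0) (hEn2 : ∫ ω, ‖n ω‖ ^ 2 ∂μ ≤ σbar2)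
    (hEX : ∀ i j, μ[X i j | m] =ᵐ[μ] g)
    (hEX2 : ∀ i j, ∀ᵐ ω ∂μ, (μ[fun y => ‖X i j y‖ ^ 2 | m]) ω ≤ V2) :
    ∀ᵐ ω ∂μ, OverTheAirRound (condExpKernel μ m ω) h X n (g ω) m_h σ_h2 V2 σbar2 := by
  have channel_moments (i : Fin N) := ae_moments_condExpKernel_of_indep hm (hh i) (hhind i)
  have sample_moments (i : Fin N) (j : Fin M) :=
    ae_moments_condExpKernel_of_condExp hm (hX i j) (hEX i j) (hEX2 i j)
  filter_upwards [ae_iIndepFun_condExpKernel hm (aemeasurable_signalFamily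
      (fun i => (hh i).aestronglyMeasurable) (fun i j => (hX i j).aestronglyMeasurable)
      hn.aestronglyMeasurable) hcondind,
    ae_all_iff.2 fun i => ae_memLp_condExpKernel hm (hh i),
    ae_all_iff.2 fun i => ae_all_iff.2 fun j => ae_memLp_condExpKernel hm (hX i j),
    ae_memLp_condExpKernel hm hn, ae_all_iff.2 channel_moments,
    ae_moments_condExpKernel_of_indep hm hn hnind,
    ae_all_iff.2 fun i => ae_all_iff.2 (sample_moments i)]
    with ω h_ind h_h h_X h_n h_channel h_noise h_sample
  simp only [Real.norm_eq_abs, sq_abs] at h_channel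
  exact ⟨h_ind, h_h, h_X, h_n, fun i => (h_channel i).1.trans (hEh i),
    fun i => (h_channel i).2.trans_le (hEh2 i), h_noise.1.trans hEn, h_noise.2.trans_le hEn2,
    fun i j => (h_sample i j).1, fun i j => (h_sample i j).2⟩

section SmoothDescent

variable {E : Type*} [NormedAddCommGroup E] [InnerProductSpace ℝ E] [CompleteSpace E] {J : E → ℝ}
  {K : NNReal}

lemma hasDerivAt_comp_add_smul {x u : E} {t : ℝ} (hJ : DifferentiableAt ℝ J (x + t • u)) :
    HasDerivAt (fun s : ℝ => J (x + s • u)) (inner ℝ (∇ J (x + t • u)) u) t := by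
  have line : HasDerivAt (fun s : ℝ => x + s • u) u t := by
    simpa using ((hasDerivAt_id t).smul_const u).const_add x
  exact hJ.hasGradientAt.hasFDerivAt.comp_hasDerivAt t line

lemma inner_gradient_add_smul_le (hLip : LipschitzWith K (∇ J)) (x u : E) {t : ℝ} (ht : 0 ≤ t) :
    inner ℝ (∇ J (x + t • u)) u ≤ inner ℝ (∇ J x) u + K * t * ‖u‖ ^ 2 :=
  calc inner ℝ (∇ J (x + t • u)) u
      = inner ℝ (∇ J x) u + inner ℝ (∇ J (x + t • u) - ∇ J x) u := by
        rw [inner_sub_left, add_sub_cancel]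
    _ ≤ inner ℝ (∇ J x) u + ‖∇ J (x + t • u) - ∇ J x‖ * ‖u‖ := by
        gcongr
        exact real_inner_le_norm _ _
    _ ≤ inner ℝ (∇ J x) u + K * ‖x + t • u - x‖ * ‖u‖ := by
        gcongr
        exact hLip.norm_sub_le _ _
    _ = inner ℝ (∇ J x) u + K * t * ‖u‖ ^ 2 := by
        rw [add_sub_cancel_left, norm_smul, Real.norm_of_nonneg ht]
        ring

lemma le_add_inner_gradient_add_sq (hJ : Differentiable ℝ J) (hLip : LipschitzWith K (∇ J))
    (x u : E) : J (x + u) ≤ J x + inner ℝ (∇ J x) u + K / 2 * ‖u‖ ^ 2 := by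
  have h_line (t : ℝ) := hasDerivAt_comp_add_smul (x := x) (u := u) (t := t) (hJ _)
  have h_quadratic (t : ℝ) :
      HasDerivAt (fun s => J x + s * inner ℝ (∇ J x) u + K / 2 * s ^ 2 * ‖u‖ ^ 2)
        (inner ℝ (∇ J x) u + K * t * ‖u‖ ^ 2) t := by
    convert! (((hasDerivAt_id t).mul_const (inner ℝ (∇ J x) u)).const_add (J x)).add
      (((hasDerivAt_pow 2 t).const_mul ((K : ℝ) / 2)).mul_const (‖u‖ ^ 2)) using 1
    push_cast
    ring
  have h_le := image_le_of_deriv_right_le_deriv_boundary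
    (fun t _ => (h_line t).continuousAt.continuousWithinAt)
    (fun t _ => (h_line t).hasDerivWithinAt) (by simp)
    (fun t _ => (h_quadratic t).continuousAt.continuousWithinAt)
    (fun t _ => (h_quadratic t).hasDerivWithinAt)
    (fun t ht => inner_gradient_add_smul_le hLip x u ht.1) (Set.right_mem_Icc.2 zero_le_one)
  simpa using h_le

variable {Ω : Type*} [MeasurableSpace Ω] {μ : Measure Ω} [IsFiniteMeasure μ] {θ v : Ω → E}

lemma memLp_comp_of_lipschitzWith {F G : Type*} [NormedAddCommGroup F] [NormedAddCommGroup G]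
    {f : F → G} (hf : LipschitzWith K f) {p : ENNReal} {u : Ω → F} (hu : MemLp u p μ) :
    MemLp (fun ω => f (u ω)) p μ := by
  have h_sub : MemLp (fun ω => f (u ω) - f 0) p μ :=
    (hf.sub (LipschitzWith.const (f 0))).comp_memLp (sub_self _) hu
  simpa [Pi.add_def] using h_sub.add (memLp_const (f 0))

lemma integrable_comp_of_lipschitzWith_gradient (hJ : Differentiable ℝ J)
    (hLip : LipschitzWith K (∇ J)) {Jstar : ℝ} (hJstar : ∀ x, Jstar ≤ J x) (hθ : MemLp θ 2 μ) :
    Integrable (fun ω => J (θ ω)) μ := by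
  have integrable_upper :
      Integrable (fun ω => J 0 + inner ℝ (∇ J 0) (θ ω) + K / 2 * ‖θ ω‖ ^ 2) μ :=
    ((integrable_const _).add (integrable_inner_of_memLp_two (memLp_const _) hθ)).add
      (hθ.norm.integrable_sq.const_mul _)
  refine integrable_of_le_of_le (hJ.continuous.comp_aestronglyMeasurable hθ.aestronglyMeasurable)
    (ae_of_all _ fun ω => hJstar (θ ω)) (ae_of_all _ fun ω => ?_) (integrable_const Jstar)
    integrable_upper
  simpa using le_add_inner_gradient_add_sq hJ hLip 0 (θ ω)

lemma integral_comp_sub_smul_le (hJ : Differentiable ℝ J) (hLip : LipschitzWith K (∇ J))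
    {Jstar : ℝ} (hJstar : ∀ x, Jstar ≤ J x) (hθ : MemLp θ 2 μ) (hv : MemLp v 2 μ) (η : ℝ) :
    ∫ ω, J (θ ω - η • v ω) ∂μ ≤ ∫ ω, J (θ ω) ∂μ - η * ∫ ω, inner ℝ (∇ J (θ ω)) (v ω) ∂μ +
      K / 2 * η ^ 2 * ∫ ω, ‖v ω‖ ^ 2 ∂μ := by
  have integrable_J := integrable_comp_of_lipschitzWith_gradient hJ hLip hJstar hθ
  have integrable_inner : Integrable (fun ω => η * inner ℝ (∇ J (θ ω)) (v ω)) μ :=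
    (integrable_inner_of_memLp_two (memLp_comp_of_lipschitzWith hLip hθ) hv).const_mul η
  have integrable_sq : Integrable (fun ω => K / 2 * η ^ 2 * ‖v ω‖ ^ 2) μ :=
    hv.norm.integrable_sq.const_mul _
  calc ∫ ω, J (θ ω - η • v ω) ∂μ
      ≤ ∫ ω, (J (θ ω) - η * inner ℝ (∇ J (θ ω)) (v ω) + K / 2 * η ^ 2 * ‖v ω‖ ^ 2) ∂μ := by
        refine integral_mono (integrable_comp_of_lipschitzWith_gradient hJ hLip hJstar
          (hθ.sub (hv.const_smul η))) ((integrable_J.sub integrable_inner).add integrable_sq)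
          fun ω => ?_
        have h_descent := le_add_inner_gradient_add_sq hJ hLip (θ ω) (-(η • v ω))
        rw [inner_neg_right, inner_smul_right, norm_neg, norm_smul, mul_pow, Real.norm_eq_abs,
          sq_abs, ← mul_assoc] at h_descent
        simpa only [sub_eq_add_neg] using h_descent
    _ = _ := by
        rw [integral_add (f := fun ω => J (θ ω) - η * inner ℝ (∇ J (θ ω)) (v ω))
            (integrable_J.sub integrable_inner) integrable_sq,
          integral_sub integrable_J integrable_inner, integral_const_mul, integral_const_mul]

end SmoothDescent

lemma average_le_of_descent {a G : ℕ → ℝ} {c D A : ℝ} (hc : 0 < c)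
    (h_step : ∀ k, a (k + 1) ≤ a k - c * G k + D) {T : ℕ} (hT : 0 < T) (hA : A ≤ a T) :
    (1 / (T : ℝ)) * ∑ k ∈ Finset.range T, G k ≤ (a 0 - A) / (c * T) + D / c := by
  have : (0 : ℝ) < T := by positivity
  have telescoped : ∑ k ∈ Finset.range T, c * G k ≤ a 0 - a T + T * D :=
    calc ∑ k ∈ Finset.range T, c * G k
        ≤ ∑ k ∈ Finset.range T, (a k - a (k + 1) + D) :=
          Finset.sum_le_sum fun k _ => by linarith [h_step k]
      _ = a 0 - a T + T * D := by
          rw [Finset.sum_add_distrib, Finset.sum_range_sub', Finset.sum_const, Finset.card_range,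
            nsmul_eq_mul]
  rw [← Finset.mul_sum] at telescoped
  calc (1 / (T : ℝ)) * ∑ k ∈ Finset.range T, G k
      = (c * ∑ k ∈ Finset.range T, G k) / (c * T) := by field_simp
    _ ≤ (a 0 - A + T * D) / (c * T) := by gcongr; linarith
    _ = (a 0 - A) / (c * T) + D / c := by field_simp

section StochasticGradientDescent

variable {Ω E : Type*} [mΩ : MeasurableSpace Ω] [StandardBorelSpace Ω] [NormedAddCommGroup E]
  [InnerProductSpace ℝ E] [CompleteSpace E]

/-- Stochastic gradient descent on `J` with stepsize `η`, adapted to `𝓕`: given the past, the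
direction `v k` is square integrable with conditional mean `a • ∇ J (θ k)` and conditional second
moment at most `b * ‖∇ J (θ k)‖ ^ 2 + s`. The conditional law given `𝓕 k` is encoded by
`condExpKernel`. -/
structure IsSGD (μ : Measure Ω) [IsFiniteMeasure μ] (𝓕 : Filtration ℕ mΩ) (J : E → ℝ)
    (θ v : ℕ → Ω → E) (η a b s : ℝ) : Prop where
  step : ∀ k, θ (k + 1) = fun ω => θ k ω - η • v k ω
  stronglyMeasurable_iterate : ∀ k, StronglyMeasurable[𝓕 k] (θ k)
  aestronglyMeasurable_direction : ∀ k, AEStronglyMeasurable (v k) μ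
  memLp_direction_condExpKernel : ∀ k, ∀ᵐ ω ∂μ, MemLp (v k) 2 (condExpKernel μ (𝓕 k) ω)
  mean_direction : ∀ k, ∀ᵐ ω ∂μ, ∫ y, v k y ∂condExpKernel μ (𝓕 k) ω = a • ∇ J (θ k ω)
  second_moment_direction : ∀ k, ∀ᵐ ω ∂μ,
    ∫ y, ‖v k y‖ ^ 2 ∂condExpKernel μ (𝓕 k) ω ≤ b * ‖∇ J (θ k ω)‖ ^ 2 + s

namespace IsSGD

variable {μ : Measure Ω} [IsProbabilityMeasure μ] {𝓕 : Filtration ℕ mΩ} {J : E → ℝ}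
  {θ v : ℕ → Ω → E} {η a b s : ℝ} {K : NNReal} {k : ℕ}

omit [StandardBorelSpace Ω] in
lemma integrable_second_moment_bound (hLip : LipschitzWith K (∇ J)) (hθk : MemLp (θ k) 2 μ) :
    Integrable (fun ω => b * ‖∇ J (θ k ω)‖ ^ 2 + s) μ :=
  ((memLp_comp_of_lipschitzWith hLip hθk).norm.integrable_sq.const_mul b).add (integrable_const s)

lemma memLp_direction (H : IsSGD μ 𝓕 J θ v η a b s) (hLip : LipschitzWith K (∇ J))
    (hθk : MemLp (θ k) 2 μ) : MemLp (v k) 2 μ :=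
  memLp_two_of_condExpKernel (𝓕.le k) (H.aestronglyMeasurable_direction k)
    (integrable_second_moment_bound hLip hθk) (H.memLp_direction_condExpKernel k)
    (H.second_moment_direction k)

lemma memLp_iterate (H : IsSGD μ 𝓕 J θ v η a b s) (hLip : LipschitzWith K (∇ J))
    (hθ0 : MemLp (θ 0) 2 μ) : ∀ k, MemLp (θ k) 2 μ
  | 0 => hθ0
  | k + 1 => by
    have ih := H.memLp_iterate hLip hθ0 k
    rw [H.step k]
    exact ih.sub ((H.memLp_direction hLip ih).const_smul η)

lemma integral_inner_gradient_direction (H : IsSGD μ 𝓕 J θ v η a b s)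
    (hLip : LipschitzWith K (∇ J)) (hθk : MemLp (θ k) 2 μ) :
    ∫ ω, inner ℝ (∇ J (θ k ω)) (v k ω) ∂μ = a * ∫ ω, ‖∇ J (θ k ω)‖ ^ 2 ∂μ :=
  integral_inner_of_integral_condExpKernel_eq_smul (𝓕.le k)
    (hLip.continuous.comp_stronglyMeasurable (H.stronglyMeasurable_iterate k))
    (memLp_comp_of_lipschitzWith hLip hθk) (H.memLp_direction hLip hθk) (H.mean_direction k)

lemma integral_norm_direction_sq_le (H : IsSGD μ 𝓕 J θ v η a b s)
    (hLip : LipschitzWith K (∇ J)) (hθk : MemLp (θ k) 2 μ) :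
    ∫ ω, ‖v k ω‖ ^ 2 ∂μ ≤ b * ∫ ω, ‖∇ J (θ k ω)‖ ^ 2 ∂μ + s := by
  refine (integral_le_integral_of_condExpKernel_le (𝓕.le k)
    (H.memLp_direction hLip hθk).norm.integrable_sq (integrable_second_moment_bound hLip hθk)
    (H.second_moment_direction k)).trans_eq ?_
  rw [integral_add ((memLp_comp_of_lipschitzWith hLip hθk).norm.integrable_sq.const_mul b)
    (integrable_const s), integral_const_mul, integral_const, probReal_univ, one_smul]

variable {Jstar : ℝ}

lemma integral_succ_le (H : IsSGD μ 𝓕 J θ v η a b s) (hJ : Differentiable ℝ J)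
    (hLip : LipschitzWith K (∇ J)) (hJstar : ∀ x, Jstar ≤ J x) (hθk : MemLp (θ k) 2 μ) :
    ∫ ω, J (θ (k + 1) ω) ∂μ ≤ ∫ ω, J (θ k ω) ∂μ
      - (η * a - K / 2 * η ^ 2 * b) * ∫ ω, ‖∇ J (θ k ω)‖ ^ 2 ∂μ + K / 2 * η ^ 2 * s := by
  rw [H.step k]
  calc ∫ ω, J (θ k ω - η • v k ω) ∂μ
      ≤ ∫ ω, J (θ k ω) ∂μ - η * ∫ ω, inner ℝ (∇ J (θ k ω)) (v k ω) ∂μ +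
          K / 2 * η ^ 2 * ∫ ω, ‖v k ω‖ ^ 2 ∂μ :=
        integral_comp_sub_smul_le hJ hLip hJstar hθk (H.memLp_direction hLip hθk) η
    _ ≤ ∫ ω, J (θ k ω) ∂μ - η * (a * ∫ ω, ‖∇ J (θ k ω)‖ ^ 2 ∂μ) +
          K / 2 * η ^ 2 * (b * ∫ ω, ‖∇ J (θ k ω)‖ ^ 2 ∂μ + s) := by
        rw [H.integral_inner_gradient_direction hLip hθk]
        gcongr
        exact H.integral_norm_direction_sq_le hLip hθk
    _ = _ := by ring

theorem average_integral_norm_gradient_sq_le (H : IsSGD μ 𝓕 J θ v η a b s)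
    (hJ : Differentiable ℝ J) (hLip : LipschitzWith K (∇ J)) (hJstar : ∀ x, Jstar ≤ J x)
    (hθ0 : MemLp (θ 0) 2 μ) (hc : 0 < η * a - K / 2 * η ^ 2 * b) {T : ℕ} (hT : 0 < T) :
    (1 / (T : ℝ)) * ∑ k ∈ Finset.range T, ∫ ω, ‖∇ J (θ k ω)‖ ^ 2 ∂μ ≤
      (∫ ω, J (θ 0 ω) ∂μ - Jstar) / ((η * a - K / 2 * η ^ 2 * b) * T) +
        K / 2 * η ^ 2 * s / (η * a - K / 2 * η ^ 2 * b) := by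
  have hθ := H.memLp_iterate hLip hθ0
  refine average_le_of_descent (a := fun k => ∫ ω, J (θ k ω) ∂μ) hc
    (fun k => H.integral_succ_le hJ hLip hJstar (hθ k)) hT ?_
  simpa using integral_mono (integrable_const Jstar)
    (integrable_comp_of_lipschitzWith_gradient hJ hLip hJstar (hθ T)) fun ω => hJstar (θ T ω)

end IsSGD

end StochasticGradientDescent

section OverTheAirConvergence

lemma lambda_pos {N M : ℕ} (hM : 0 < M) {m_h σ_h2 : ℝ} (hm : 0 < m_h)
    (hchan : σ_h2 ≤ ((N : ℝ) + 1) * m_h ^ 2) :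
    0 < (M : ℝ) * ((N : ℝ) + 1) * m_h ^ 2 - ((M : ℝ) - 1) * σ_h2 := by
  have hM' : (0 : ℝ) ≤ M - 1 := sub_nonneg.2 (by exact_mod_cast hM)
  calc 0 < ((N : ℝ) + 1) * m_h ^ 2 := by positivity
    _ ≤ ((N : ℝ) + 1) * m_h ^ 2 + (M - 1) * (((N : ℝ) + 1) * m_h ^ 2 - σ_h2) :=
      le_add_of_nonneg_right (mul_nonneg hM' (sub_nonneg.2 hchan))
    _ = _ := by ring

lemma aestronglyMeasurable_receivedSignal {N M : ℕ} {Ω E : Type*} [MeasurableSpace Ω]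
    {μ : Measure Ω} [NormedAddCommGroup E] [NormedSpace ℝ E] {h : Fin N → Ω → ℝ}
    {X : Fin N → Fin M → Ω → E} {n : Ω → E} (hh : ∀ i, AEStronglyMeasurable (h i) μ)
    (hX : ∀ i j, AEStronglyMeasurable (X i j) μ) (hn : AEStronglyMeasurable n μ) :
    AEStronglyMeasurable (receivedSignal h X n) μ :=
  (Finset.aestronglyMeasurable_fun_sum _ fun i _ => (hh i).smul
    ((Finset.aestronglyMeasurable_fun_sum _ fun j _ => hX i j).const_smul _)).add hn

variable {N M : ℕ} {Ω E : Type*} [mΩ : MeasurableSpace Ω] [StandardBorelSpace Ω]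
  [NormedAddCommGroup E] [InnerProductSpace ℝ E] [CompleteSpace E] [MeasurableSpace E]
  [BorelSpace E] [SecondCountableTopology E] {μ : Measure Ω} [IsProbabilityMeasure μ]
  {m_h σ_h2 V2 σbar2 : ℝ} {J : E → ℝ} {𝓕 : Filtration ℕ mΩ} {h : ℕ → Fin N → Ω → ℝ}
  {X : ℕ → Fin N → Fin M → Ω → E} {n : ℕ → Ω → E} {θ : ℕ → Ω → E}

lemma isSGD_receivedSignal (hM : 0 < M) {η : ℝ}
    (hθ : ∀ k, θ (k + 1) = fun ω => θ k ω - η • receivedSignal (h k) (X k) (n k) ω)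
    (hθmeas : ∀ k, StronglyMeasurable[𝓕 k] (θ k))
    (hmeas : ∀ k, AEStronglyMeasurable (receivedSignal (h k) (X k) (n k)) μ)
    (hround : ∀ k, ∀ᵐ ω ∂μ, OverTheAirRound (condExpKernel μ (𝓕 k) ω) (h k) (X k) (n k)
      (∇ J (θ k ω)) m_h σ_h2 V2 σbar2) :
    IsSGD μ 𝓕 J θ (fun k => receivedSignal (h k) (X k) (n k)) η (N * m_h)
      (N * (σ_h2 * ((M - 1) / M)) + N * (N - 1) * m_h ^ 2) (N * (σ_h2 * (V2 / M)) + σbar2) where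
  step := hθ
  stronglyMeasurable_iterate := hθmeas
  aestronglyMeasurable_direction := hmeas
  memLp_direction_condExpKernel k := (hround k).mono fun _ H => H.memLp_receivedSignal
  mean_direction k := (hround k).mono fun _ H => H.integral_receivedSignal hM
  second_moment_direction k :=
    (hround k).mono fun _ H => H.integral_norm_receivedSignal_sq_le hM

theorem overTheAir_convergence_general (hN : 0 < N) (hM : 0 < M) {α Λ Jstar : ℝ} {L : NNReal}
    (hm : 0 < m_h) (hα : 0 < α) (hαL : α * (m_h * L) ≤ 1)
    (hΛ : Λ = (M : ℝ) * ((N : ℝ) + 1) * m_h ^ 2 - ((M : ℝ) - 1) * σ_h2) (hΛpos : 0 < Λ)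
    (hJ : Differentiable ℝ J) (hLip : LipschitzWith L (∇ J)) (hJstar : ∀ x, Jstar ≤ J x)
    (hθ0 : MemLp (θ 0) 2 μ)
    (hθ : ∀ k, θ (k + 1) =
      fun ω => θ k ω - (α / (N : ℝ)) • receivedSignal (h k) (X k) (n k) ω)
    (hθmeas : ∀ k, StronglyMeasurable[𝓕 k] (θ k))
    (hmeas : ∀ k, AEStronglyMeasurable (receivedSignal (h k) (X k) (n k)) μ)
    (hround : ∀ k, ∀ᵐ ω ∂μ, OverTheAirRound (condExpKernel μ (𝓕 k) ω) (h k) (X k) (n k)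
      (∇ J (θ k ω)) m_h σ_h2 V2 σbar2) {K : ℕ} (hK : 0 < K) :
    (1 / (K : ℝ)) * ∑ k ∈ Finset.range K, ∫ ω, ‖∇ J (θ k ω)‖ ^ 2 ∂μ ≤
      2 * (M : ℝ) * (N : ℝ) * m_h * (∫ ω, J (θ 0 ω) ∂μ - Jstar) / (α * Λ * (K : ℝ))
        + (M : ℝ) * σbar2 / ((N : ℝ) * Λ) + σ_h2 * V2 / Λ := by
  have hαm : 0 < α * m_h := mul_pos hα hm
  have smoothness_le : L ≤ (1 / (α * m_h)).toNNReal := by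
    rw [Real.le_toNNReal_iff_coe_le (by positivity), le_div_iff₀' hαm, mul_assoc]
    exact hαL
  have descent_coeff : α / N * (N * m_h) - 1 / (α * m_h) / 2 * (α / N) ^ 2 *
      (N * (σ_h2 * ((M - 1) / M)) + N * (N - 1) * m_h ^ 2) = α * Λ / (2 * M * N * m_h) := by
    rw [hΛ]
    field_simp
    ring
  have sgd_bound := (isSGD_receivedSignal hM hθ hθmeas hmeas
    hround).average_integral_norm_gradient_sq_le hJ (hLip.weaken smoothness_le) hJstar hθ0
  rw [Real.coe_toNNReal _ (by positivity), descent_coeff] at sgd_bound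
  refine (sgd_bound (by positivity) hK).trans_eq ?_
  field_simp
  ring

end OverTheAirConvergence

/-- Theorem 1 of the paper: convergence of over-the-air federated policy
gradient.  If `σ_h² ≤ (N+1) m_h²`, `0 < α ≤ 1/(m_h L)` and
`Λ = M(N+1)m_h² - (M-1)σ_h²`, then for every `K ≥ 1`,
`(1/K) Σ_{k<K} E[‖∇J(θ^k)‖²] ≤ 2 M N m_h (J(θ⁰) - J*)/(α Λ K) + M σ̄²/(N Λ) + σ_h² V²/Λ`. -/
theorem overTheAir_convergence
    {d : ℕ} (hd : 1 ≤ d) {N M : ℕ} (hN : 0 < N) (hM : 0 < M)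
    {Ω : Type*} [mΩ : MeasurableSpace Ω] [StandardBorelSpace Ω] [Nonempty Ω]
    (μ : Measure Ω) [IsProbabilityMeasure μ]
    (m_h σ_h2 V σbar2 α L : ℝ)
    (hm : 0 < m_h) (hσh : 0 ≤ σ_h2) (hV : 0 ≤ V) (hσbar : 0 ≤ σbar2)
    (hL : 0 < L) (hα : 0 < α) (hαL : α ≤ 1 / (m_h * L))
    (J : EuclideanSpace ℝ (Fin d) → ℝ) (hJ : Differentiable ℝ J)
    (hLip : ∀ x y : EuclideanSpace ℝ (Fin d),
      ‖gradient J x - gradient J y‖ ≤ L * ‖x - y‖)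
    (Jstar : ℝ) (hJstar : IsGLB (Set.range J) Jstar)
    (𝓕 : Filtration ℕ mΩ)
    (h : ℕ → Fin N → Ω → ℝ)
    (X : ℕ → Fin N → Fin M → Ω → EuclideanSpace ℝ (Fin d))
    (n : ℕ → Ω → EuclideanSpace ℝ (Fin d))
    (θ : ℕ → Ω → EuclideanSpace ℝ (Fin d))
    (θ0 : EuclideanSpace ℝ (Fin d)) (hθ0 : θ 0 = fun _ => θ0)
    (v : ℕ → Ω → EuclideanSpace ℝ (Fin d))
    (hv : ∀ k, v k = fun ω =>
      (∑ i : Fin N, h k i ω • ((1 / (M : ℝ)) • ∑ m : Fin M, X k i m ω)) + n k ω)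
    (hθ : ∀ k, θ (k + 1) = fun ω => θ k ω - (α / (N : ℝ)) • v k ω)
    (hθmeas : ∀ k, Measurable[𝓕 k] (θ k))
    (hh2 : ∀ k i, MemLp (h k i) 2 μ)
    (hX2 : ∀ k i m, MemLp (X k i m) 2 μ)
    (hn2 : ∀ k, MemLp (n k) 2 μ)
    (hcondind : ∀ k, iCondIndepFun (𝓕 k) (𝓕.le k)
      (otaFam (h k) (X k) (n k)) μ)
    (hhind : ∀ k i, Indep (MeasurableSpace.comap (h k i) inferInstance) (𝓕 k) μ)
    (hnind : ∀ k, Indep (MeasurableSpace.comap (n k) inferInstance) (𝓕 k) μ)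
    (hEh : ∀ k i, ∫ ω, h k i ω ∂μ = m_h)
    (hEh2 : ∀ k i, ∫ ω, (h k i ω) ^ 2 ∂μ = σ_h2)
    (hEn : ∀ k, ∫ ω, n k ω ∂μ = 0)
    (hVn : ∀ k, ∫ ω, ‖n k ω‖ ^ 2 ∂μ ≤ σbar2)
    (hEX : ∀ k i m, μ[X k i m | 𝓕 k] =ᵐ[μ] fun ω => gradient J (θ k ω))
    (hVX : ∀ k i m, ∀ᵐ ω ∂μ, (μ[fun ω' => ‖X k i m ω'‖ ^ 2 | 𝓕 k]) ω ≤ V ^ 2)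
    (hchan : σ_h2 ≤ ((N : ℝ) + 1) * m_h ^ 2)
    (Λ : ℝ) (hΛ : Λ = (M : ℝ) * ((N : ℝ) + 1) * m_h ^ 2 - ((M : ℝ) - 1) * σ_h2) :
    ∀ K : ℕ, 1 ≤ K →
      (1 / (K : ℝ)) * ∑ k ∈ Finset.range K, ∫ ω, ‖gradient J (θ k ω)‖ ^ 2 ∂μ ≤
        2 * (M : ℝ) * (N : ℝ) * m_h * (J θ0 - Jstar) / (α * Λ * (K : ℝ))
          + (M : ℝ) * σbar2 / ((N : ℝ) * Λ)
          + σ_h2 * V ^ 2 / Λ := by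
  intro K hK
  have smoothness : α * (m_h * (⟨L, hL.le⟩ : NNReal)) ≤ 1 :=
    (le_div_iff₀ (mul_pos hm hL)).1 hαL
  have lipschitz : LipschitzWith ⟨L, hL.le⟩ (∇ J) :=
    LipschitzWith.of_dist_le_mul fun x y => by
      rw [dist_eq_norm, dist_eq_norm]
      exact hLip x y
  have hround (k : ℕ) := ae_overTheAirRound_condExpKernel (𝓕.le k) (hh2 k) (hX2 k) (hn2 k)
    (otaFam_eq_signalFamily (h k) (X k) (n k) ▸ hcondind k) (hhind k) (hnind k) (hEh k)
    (fun i => (hEh2 k i).le) (hEn k) (hVn k) (hEX k) (hVX k)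
  have hmeas (k : ℕ) := aestronglyMeasurable_receivedSignal
    (fun i => (hh2 k i).aestronglyMeasurable) (fun i m => (hX2 k i m).aestronglyMeasurable)
    (hn2 k).aestronglyMeasurable
  simpa only [hθ0, integral_const, probReal_univ, one_smul] using
    overTheAir_convergence_general hN hM hm hα smoothness hΛ (hΛ ▸ lambda_pos hM hm hchan) hJ
      lipschitz (fun x => hJstar.1 (Set.mem_range_self x)) (hθ0 ▸ memLp_const θ0)
      (fun k => by rw [hθ k, hv k]; rfl) (fun k => (hθmeas k).stronglyMeasurable) hmeas hround hK
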